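/- Let 𝒫 = (P, μ, σ) be an n-dimensional system. For every q ∈ [1, n/(n−1)] there exists a constant C_{P,q} > 0 such that for every non-negative convex function u : P → [0,∞] one has (∫_P u^q dμ)^{1/q} ≤ C_{P,q} · ∫_{∂P} u dσ. -/

import Mathlib

/-!
By quasiconvexity, the value of `u` at a point of `P` is at most the larger of its values at the two
ends of any chord through that point. Hence, for each coordinate direction `eᵢ`, `u` is dominated on
`P` by a function `fᵢ` that does not depend on `xᵢ`: the sum of `u` over the points where the line
`x + ℝ eᵢ` meets the facets of `P`. The integral of `fᵢ` over a unit slab is controlled by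
`∫_{∂P} u`, because projecting a facet along `eᵢ` does not increase its `(n - 1)`-dimensional area.
The Loomis-Whitney mechanism behind the Gagliardo-Nirenberg-Sobolev inequality turns the `n` bounds
`u ≤ fᵢ` into the estimate for the exponent `n / (n - 1)`, and Jensen's inequality on the set `P` of
finite volume gives the smaller exponents.

A convex `u` need not be Borel measurable on `∂P`, so the argument is run for its lower
semicontinuous hull, which is below `u` on `P` and agrees with it almost everywhere there.
-/

open MeasureTheory Filter Topology
open scoped ENNReal NNReal

noncomputable section

abbrev Euc (n : ℕ) := EuclideanSpace ℝ (Fin n)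

/-- A `[0,∞]`-valued function on a set `K ⊆ ℝⁿ` is convex if
`u((1−t)x+ty) ≤ (1−t)u(x)+t·u(y)` in `[0,∞]` for all `x, y ∈ K` and `t ∈ [0,1]`. -/
def ConvexFnOn {n : ℕ} (K : Set (Euc n)) (u : Euc n → ℝ≥0∞) : Prop :=
  ∀ ⦃x⦄, x ∈ K → ∀ ⦃y⦄, y ∈ K → ∀ ⦃t : ℝ⦄, 0 ≤ t → t ≤ 1 →
    u ((1 - t) • x + t • y) ≤ ENNReal.ofReal (1 - t) * u x + ENNReal.ofReal t * u y

/-- A polytope: a compact set with nonempty interior which is a finite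
intersection of closed half-spaces (cut out by nonzero affine functions). -/
def IsPolytope {n : ℕ} (P : Set (Euc n)) : Prop :=
  IsCompact P ∧ (interior P).Nonempty ∧
    ∃ (m : ℕ) (L : Fin m → (Euc n →ᵃ[ℝ] ℝ)),
      (∀ k, L k ≠ 0) ∧ P = ⋂ k, {x | 0 ≤ L k x}

/-- `F` is a face of `P`: the intersection of `P` with the zero locus of a
nonzero affine function that is nonnegative on `P`. -/
def IsFaceOf {n : ℕ} (P F : Set (Euc n)) : Prop :=
  ∃ ℓ : Euc n →ᵃ[ℝ] ℝ, ℓ ≠ 0 ∧ (∀ y ∈ P, 0 ≤ ℓ y) ∧ F = {y ∈ P | ℓ y = 0}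

/-- A facet: a face spanning an affine subspace of dimension `n − 1`. -/
def IsFacetOf {n : ℕ} (P F : Set (Euc n)) : Prop :=
  IsFaceOf P F ∧ Module.finrank ℝ (vectorSpan ℝ F) + 1 = n

/-- A simple polytope: every vertex lies on exactly `n` facets. -/
def IsSimplePolytope {n : ℕ} (P : Set (Euc n)) : Prop :=
  IsPolytope P ∧ ∀ v : Euc n, IsFaceOf P {v} →
    {F : Set (Euc n) | IsFacetOf P F ∧ v ∈ F}.ncard = n

/-- An `n`-dimensional system `𝒫 = (P, μ, σ)`: a simple polytope `P ⊆ ℝⁿ`, a flat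
measure `μ` on `P` (a positive constant multiple of Lebesgue measure restricted
to `P`), and a flat measure `σ` on `∂P` (supported on the boundary and, on each
facet, a positive constant multiple of `(n−1)`-dimensional Hausdorff measure). -/
structure NSystem (n : ℕ) where
  P : Set (Euc n)
  μ : Measure (Euc n)
  σ : Measure (Euc n)
  simple : IsSimplePolytope P
  flat : ∃ c : ℝ, 0 < c ∧ μ = ENNReal.ofReal c • volume.restrict P
  bdry_supp : σ (frontier P)ᶜ = 0
  flat_bdry : ∀ F : Set (Euc n), IsFacetOf P F →
    ∃ c : ℝ, 0 < c ∧ σ.restrict F =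
      ENNReal.ofReal c • (Measure.hausdorffMeasure ((n : ℝ) - 1)).restrict F

section LscHull

variable {X β : Type*} [TopologicalSpace X] [CompleteLinearOrder β]

/-- The lower semicontinuous hull of the restriction of `u` to `P`; it is `⊤` off the closure
of `P`. -/
def lscHull (P : Set X) (u : X → β) (x : X) : β :=
  liminf u (𝓝[P] x)

lemma lscHull_le (u : X → β) {P : Set X} {x : X} (hx : x ∈ P) : lscHull P u x ≤ u x :=
  not_lt.1 fun h => lt_irrefl _ ((eventually_lt_of_lt_liminf h).self_of_nhdsWithin hx)

variable [DenselyOrdered β]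

lemma lscHull_le_iff_forall_mem_closure {P : Set X} {u : X → β} {x : X} {r : β} :
    lscHull P u x ≤ r ↔ ∀ c > r, x ∈ closure {y ∈ P | u y ≤ c} := by
  simp only [mem_closure_iff_frequently]
  constructor
  · intro h c hc
    have hlt : ∃ᶠ y in 𝓝[P] x, u y < c := frequently_lt_of_liminf_lt (h := h.trans_lt hc)
    exact (frequently_nhdsWithin_iff.1 hlt).mono fun y hy => ⟨hy.2, hy.1.le⟩
  · intro h
    refine le_of_forall_gt_imp_ge_of_dense fun c hc => liminf_le_of_frequently_le' ?_
    exact frequently_nhdsWithin_iff.2 ((h c hc).mono fun y hy => ⟨hy.2, hy.1⟩)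

lemma setOf_lscHull_le (P : Set X) (u : X → β) (r : β) :
    {x | lscHull P u x ≤ r} = ⋂ c > r, closure {y ∈ P | u y ≤ c} := by
  ext x
  simp [lscHull_le_iff_forall_mem_closure]

lemma lowerSemicontinuous_lscHull (P : Set X) (u : X → β) :
    LowerSemicontinuous (lscHull P u) := by
  refine lowerSemicontinuous_iff_isClosed_preimage.2 fun r => ?_
  change IsClosed {x | lscHull P u x ≤ r}
  rw [setOf_lscHull_le]
  exact isClosed_biInter fun c _ => isClosed_closure

end LscHull

section Quasiconvex

variable {E β : Type*} [CompleteLinearOrder β] [DenselyOrdered β] {P : Set E} {u : E → β}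

lemma quasiconvexOn_lscHull [AddCommGroup E] [Module ℝ E] [TopologicalSpace E]
    [IsTopologicalAddGroup E] [ContinuousConstSMul ℝ E] (hu : QuasiconvexOn ℝ P u) :
    QuasiconvexOn ℝ P (lscHull P u) := by
  refine hu.convex.quasiconvexOn_of_convex_le fun r => ?_
  rw [setOf_lscHull_le]
  exact convex_iInter₂ fun c _ => (hu c).closure

lemma ae_eq_lscHull [TopologicalSpace β] [OrderTopology β] [SecondCountableTopology β]
    [NormedAddCommGroup E] [NormedSpace ℝ E] [FiniteDimensional ℝ E] [MeasurableSpace E]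
    [BorelSpace E] (μ : Measure E) [μ.IsAddHaarMeasure] (hu : QuasiconvexOn ℝ P u) :
    ∀ᵐ x ∂μ, x ∈ P → u x = lscHull P u x := by
  obtain ⟨D, hDc, hDd⟩ := TopologicalSpace.exists_countable_dense β
  have hfrontier : ∀ᵐ x ∂μ, ∀ c ∈ D, x ∉ frontier {y ∈ P | u y ≤ c} :=
    (ae_ball_iff hDc).2 fun c _ => measure_eq_zero_iff_ae_notMem.1 ((hu c).addHaar_frontier μ)
  filter_upwards [hfrontier] with x hx hxP
  refine le_antisymm (not_lt.1 fun hlt => ?_) (lscHull_le u hxP)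
  obtain ⟨c, hcD, hlc, hcu⟩ := hDd.exists_between hlt
  exact hx c hcD ⟨lscHull_le_iff_forall_mem_closure.1 le_rfl c hlc,
    fun hi => (interior_subset hi).2.not_gt hcu⟩

end Quasiconvex

lemma ConvexFnOn.quasiconvexOn {n : ℕ} {P : Set (Euc n)} {u : Euc n → ℝ≥0∞}
    (hu : ConvexFnOn P u) (hP : Convex ℝ P) : QuasiconvexOn ℝ P u := by
  refine quasiconvexOn_iff_le_max.2 ⟨hP, fun x hx y hy a b ha hb hab => ?_⟩
  obtain rfl : a = 1 - b := eq_sub_of_add_eq hab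
  calc u ((1 - b) • x + b • y)
      ≤ ENNReal.ofReal (1 - b) * u x + ENNReal.ofReal b * u y := hu hx hy hb (sub_nonneg.1 ha)
    _ ≤ ENNReal.ofReal (1 - b) * max (u x) (u y) + ENNReal.ofReal b * max (u x) (u y) := by
      gcongr
      exacts [le_max_left _ _, le_max_right _ _]
    _ = max (u x) (u y) := by
      rw [← add_mul, ← ENNReal.ofReal_add ha hb, hab, ENNReal.ofReal_one, one_mul]

section ObliqueProj

variable {𝕜 V : Type*} [Field 𝕜] [AddCommGroup V] [Module 𝕜 V] (l : V →ᵃ[𝕜] 𝕜) (v : V)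

lemma affineMap_add_smul (x : V) (t : 𝕜) : l (x + t • v) = l x + t * l.linear v := by
  simpa [add_comm] using l.map_vadd x (t • v)

/-- The projection along `v` onto the hyperplane `{l = 0}`. If `v` is parallel to the hyperplane,
then `l.linear v = 0` and this is the identity map. -/
def obliqueProj : V →ᵃ[𝕜] V :=
  AffineMap.id 𝕜 V - (LinearMap.toSpanSingleton 𝕜 V v).toAffineMap.comp ((l.linear v)⁻¹ • l)

lemma obliqueProj_apply (x : V) : obliqueProj l v x = x - (l x / l.linear v) • v := by
  simp [obliqueProj, div_eq_inv_mul]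

variable {l v}

lemma obliqueProj_add_smul (hv : l.linear v ≠ 0) (x : V) (t : 𝕜) :
    obliqueProj l v (x + t • v) = obliqueProj l v x := by
  rw [obliqueProj_apply, obliqueProj_apply, affineMap_add_smul, add_div, mul_div_cancel_right₀ _ hv,
    add_smul]
  abel

lemma obliqueProj_of_eq_zero {x : V} (hx : l x = 0) : obliqueProj l v x = x := by
  simp [obliqueProj_apply, hx]

lemma vectorSpan_eq_ker_of_comap_obliqueProj_eq_top {F : Set V} (hF : ∀ y ∈ F, l y = 0)
    (hspan : (affineSpan 𝕜 F).comap (obliqueProj l v) = ⊤) :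
    vectorSpan 𝕜 F = LinearMap.ker l.linear := by
  apply le_antisymm
  · rw [vectorSpan_def, Submodule.span_le]
    rintro _ ⟨a, ha, b, hb, rfl⟩
    simpa [hF a ha, hF b hb] using l.linearMap_vsub a b
  · intro w hw
    have hmem (x : V) : obliqueProj l v x ∈ affineSpan 𝕜 F := by
      simp [← AffineSubspace.mem_comap, hspan]
    have hlw : l w = l 0 := by simpa [LinearMap.mem_ker.1 hw] using affineMap_add_smul l w 0 1
    have hdir := AffineSubspace.vsub_mem_direction (hmem w) (hmem 0)
    rw [direction_affineSpan] at hdir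
    simpa [obliqueProj_apply, hlw] using hdir

end ObliqueProj

section Polyhedron

variable {E ι : Type*} [NormedAddCommGroup E] [NormedSpace ℝ E]

/-- The intersection of the closed half-spaces `{0 ≤ L k}`. -/
def polyhedron (L : ι → E →ᵃ[ℝ] ℝ) : Set E := ⋂ k, {x | 0 ≤ L k x}

/-- The face of `polyhedron L` on which the constraint `0 ≤ L k` is active. It is allowed to have
any dimension, or to be empty, and so need not be a facet. -/
def wall (L : ι → E →ᵃ[ℝ] ℝ) (k : ι) : Set E := {x ∈ polyhedron L | L k x = 0}

variable {L : ι → E →ᵃ[ℝ] ℝ} {v x : E} {k : ι}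

lemma mem_polyhedron : x ∈ polyhedron L ↔ ∀ k, 0 ≤ L k x := Set.mem_iInter

variable (L) in
lemma convex_polyhedron : Convex ℝ (polyhedron L) :=
  convex_iInter fun k => (convex_Ici (0 : ℝ)).affine_preimage (L k)

variable (L) in
lemma isClosed_polyhedron [FiniteDimensional ℝ E] : IsClosed (polyhedron L) :=
  isClosed_iInter fun k => isClosed_Ici.preimage (L k).continuous_of_finiteDimensional

variable (L k) in
lemma isClosed_wall [FiniteDimensional ℝ E] : IsClosed (wall L k) :=
  (isClosed_polyhedron L).inter
    (isClosed_singleton.preimage (L k).continuous_of_finiteDimensional)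

lemma wall_subset_frontier_polyhedron (hv : (L k).linear v ≠ 0) :
    wall L k ⊆ frontier (polyhedron L) := by
  rintro y ⟨hyP, hyk⟩
  refine ⟨subset_closure hyP, fun hyi => ?_⟩
  have htendsto : Tendsto (fun t : ℝ => y + t • -(L k).linear v • v) (𝓝[>] 0) (𝓝 y) := by
    refine Tendsto.mono_left ?_ nhdsWithin_le_nhds
    exact Continuous.tendsto' (by fun_prop) 0 y (by simp)
  obtain ⟨t, htP, ht⟩ := ((htendsto.eventually (mem_interior_iff_mem_nhds.1 hyi)).and
    self_mem_nhdsWithin).exists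
  have hLt := mem_polyhedron.1 htP k
  rw [affineMap_add_smul, hyk, map_smul, smul_eq_mul, zero_add] at hLt
  nlinarith [mul_pos (Set.mem_Ioi.1 ht) (mul_self_pos.2 hv)]

lemma exists_linear_neg_of_isBounded (hb : Bornology.IsBounded (polyhedron L)) (hv : v ≠ 0)
    (hx : x ∈ polyhedron L) : ∃ k, (L k).linear v < 0 := by
  by_contra! hlin
  have hray (t : ℝ) (ht : 0 ≤ t) : x + t • v ∈ polyhedron L := mem_polyhedron.2 fun k => by
    rw [affineMap_add_smul]
    exact add_nonneg (mem_polyhedron.1 hx k) (mul_nonneg ht (hlin k))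
  obtain ⟨R, hR⟩ := Metric.isBounded_iff.1 hb
  have hR0 : 0 ≤ R := dist_nonneg.trans (hR hx hx)
  have hdist := hR (hray ((R + 1) / ‖v‖) (by positivity)) hx
  rw [dist_eq_norm, add_sub_cancel_left, norm_smul, Real.norm_of_nonneg (by positivity),
    div_mul_cancel₀ _ (norm_ne_zero_iff.2 hv)] at hdist
  linarith

lemma exists_add_smul_mem_wall [Finite ι] (hb : Bornology.IsBounded (polyhedron L)) (hv : v ≠ 0)
    (hx : x ∈ polyhedron L) :
    ∃ t : ℝ, 0 ≤ t ∧ ∃ k, (L k).linear v < 0 ∧ x + t • v ∈ wall L k := by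
  obtain ⟨k, hk, hmin⟩ := Set.exists_min_image {k | (L k).linear v < 0}
    (fun k => L k x / -(L k).linear v) (Set.toFinite _) (exists_linear_neg_of_isBounded hb hv hx)
  have hk' : 0 < -(L k).linear v := neg_pos.2 hk
  have ht : 0 ≤ L k x / -(L k).linear v := div_nonneg (mem_polyhedron.1 hx k) hk'.le
  refine ⟨_, ht, k, hk, mem_polyhedron.2 fun j => ?_, ?_⟩
  · rw [affineMap_add_smul]
    by_cases hj : (L j).linear v < 0
    · have := hmin j hj
      rw [le_div_iff₀ (neg_pos.2 hj)] at this
      linarith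
    · exact add_nonneg (mem_polyhedron.1 hx j) (mul_nonneg ht (not_lt.1 hj))
  · rw [affineMap_add_smul, div_neg, neg_mul, div_mul_cancel₀ _ (ne_of_lt hk), add_neg_cancel]

end Polyhedron

section TransversalSum

variable {E ι : Type*} [NormedAddCommGroup E] [NormedSpace ℝ E] (L : ι → E →ᵃ[ℝ] ℝ) (v : E)

lemma measurable_indicator_wall_obliqueProj [MeasurableSpace E] [BorelSpace E]
    [FiniteDimensional ℝ E] {h : E → ℝ≥0∞} (hh : Measurable h) (k : ι) :
    Measurable fun x => (wall L k).indicator h (obliqueProj (L k) v x) :=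
  (hh.indicator (isClosed_wall L k).measurableSet).comp
    (obliqueProj (L k) v).continuous_of_finiteDimensional.measurable

variable [Fintype ι]

/-- The sum of `h` over the points where the line `x + ℝ v` meets the walls of `polyhedron L`
transversal to `v`, a point lying on several walls being counted once for each. -/
def transversalSum (h : E → ℝ≥0∞) (x : E) : ℝ≥0∞ :=
  ∑ k with (L k).linear v ≠ 0, (wall L k).indicator h (obliqueProj (L k) v x)

lemma transversalSum_add_smul (h : E → ℝ≥0∞) (x : E) (t : ℝ) :
    transversalSum L v h (x + t • v) = transversalSum L v h x :=
  Finset.sum_congr rfl fun k hk => by rw [obliqueProj_add_smul (Finset.mem_filter.1 hk).2]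

lemma measurable_transversalSum [MeasurableSpace E] [BorelSpace E] [FiniteDimensional ℝ E]
    {h : E → ℝ≥0∞} (hh : Measurable h) : Measurable (transversalSum L v h) :=
  Finset.measurable_fun_sum _ fun k _ => measurable_indicator_wall_obliqueProj L v hh k

variable {L v}

lemma le_transversalSum_of_add_smul_mem_wall (h : E → ℝ≥0∞) {x : E} {t : ℝ} {k : ι}
    (hk : (L k).linear v ≠ 0) (hx : x + t • v ∈ wall L k) :
    h (x + t • v) ≤ transversalSum L v h x := by
  calc h (x + t • v) = (wall L k).indicator h (obliqueProj (L k) v x) := by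
        rw [← obliqueProj_add_smul hk x t, obliqueProj_of_eq_zero hx.2, Set.indicator_of_mem hx]
    _ ≤ transversalSum L v h x :=
        Finset.single_le_sum (f := fun k => (wall L k).indicator h (obliqueProj (L k) v x))
          (fun _ _ => zero_le) (by simpa using hk)

lemma le_transversalSum (hb : Bornology.IsBounded (polyhedron L)) (hv : v ≠ 0) {h : E → ℝ≥0∞}
    (hh : QuasiconvexOn ℝ (polyhedron L) h) {x : E} (hx : x ∈ polyhedron L) :
    h x ≤ transversalSum L v h x := by
  obtain ⟨t, ht, k, hk, htk⟩ := exists_add_smul_mem_wall hb hv hx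
  obtain ⟨s, hs, j, hj, hsj⟩ := exists_add_smul_mem_wall hb (neg_ne_zero.2 hv) hx
  rw [smul_neg, ← neg_smul] at hsj
  rw [map_neg, neg_lt_zero] at hj
  have hseg : x ∈ segment ℝ (x + -s • v) (x + t • v) := by
    rw [mem_segment_iff_sameRay]
    simpa using ((SameRay.refl v).nonneg_smul_left hs).nonneg_smul_right ht
  obtain ⟨a, b, ha, hb', hab, hcomb⟩ := hseg
  calc h x ≤ max (h (x + -s • v)) (h (x + t • v)) := by
        rw [← congrArg h hcomb]
        exact (quasiconvexOn_iff_le_max.1 hh).2 hsj.1 htk.1 ha hb' hab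
    _ ≤ transversalSum L v h x :=
        max_le (le_transversalSum_of_add_smul_mem_wall h hj.ne' hsj)
          (le_transversalSum_of_add_smul_mem_wall h hk.ne htk)

end TransversalSum

section ShadowMeasure

lemma addHaar_preimage_obliqueProj_eq_zero_of_comap_ne_top {E : Type*} [NormedAddCommGroup E]
    [NormedSpace ℝ E] [FiniteDimensional ℝ E] [MeasurableSpace E] [BorelSpace E] (μ : Measure E)
    [μ.IsAddHaarMeasure] {F : Set E} {l : E →ᵃ[ℝ] ℝ} {v : E}
    (hspan : (affineSpan ℝ F).comap (obliqueProj l v) ≠ ⊤) : μ (obliqueProj l v ⁻¹' F) = 0 := by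
  refine measure_mono_null ?_ (Measure.addHaar_affineSubspace μ _ hspan)
  exact fun x hx => subset_affineSpan ℝ F hx

lemma volume_cylinder_le {n : ℕ} (i : Fin n) (t : Set ℝ) (A : Set (Euc n)) :
    volume {x : Euc n | x i ∈ t ∧ ∃ y ∈ A, ∀ j ≠ i, y j = x j} ≤
      volume t * Measure.hausdorffMeasure ((n : ℝ) - 1) A := by
  obtain _ | m := n
  · exact i.elim0
  rw [Nat.cast_succ, add_sub_cancel_right]
  let π : Euc (m + 1) → Fin m → ℝ := fun x => i.removeNth x
  have hπ : LipschitzWith 1 π := LipschitzWith.of_dist_le_mul fun x y => by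
    rw [NNReal.coe_one, one_mul]
    exact (dist_pi_le_iff dist_nonneg).2 fun j => PiLp.dist_apply_le x y _
  have himage : volume (π '' A) ≤ Measure.hausdorffMeasure (m : ℝ) A := by
    have hvol : (Measure.hausdorffMeasure (m : ℝ) : Measure (Fin m → ℝ)) = volume := by
      simpa using hausdorffMeasure_pi_real (ι := Fin m)
    simpa [hvol] using hπ.hausdorffMeasure_image_le (Nat.cast_nonneg m) A
  let e : Euc (m + 1) ≃ᵐ ℝ × (Fin m → ℝ) :=
    (MeasurableEquiv.toLp 2 _).symm.trans (MeasurableEquiv.piFinSuccAbove (fun _ => ℝ) i)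
  have he : MeasurePreserving e volume volume :=
    (volume_preserving_piFinSuccAbove (fun _ => ℝ) i).comp
      (PiLp.volume_preserving_ofLp (Fin (m + 1)))
  calc volume {x : Euc (m + 1) | x i ∈ t ∧ ∃ y ∈ A, ∀ j ≠ i, y j = x j}
      ≤ volume (e ⁻¹' t ×ˢ (π '' A)) := by
        refine measure_mono ?_
        rintro x ⟨hxt, y, hyA, hyx⟩
        exact ⟨hxt, y, hyA, funext fun j => hyx _ (i.succAbove_ne j)⟩
    _ = volume t * volume (π '' A) := by
        rw [he.measure_preimage_equiv, Measure.volume_eq_prod, Measure.prod_prod]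
    _ ≤ volume t * Measure.hausdorffMeasure (m : ℝ) A := by gcongr

/-- The slab `{0 ≤ xᵢ ≤ 1}`. Only its unit width matters: integrating over it a function that does
not depend on `xᵢ` amounts to integrating over the remaining coordinates. -/
def unitSlab {n : ℕ} (i : Fin n) : Set (Euc n) := {x | x i ∈ Set.Icc 0 1}

lemma map_obliqueProj_single_le_hausdorffMeasure {n : ℕ} (l : Euc n →ᵃ[ℝ] ℝ) (i : Fin n) :
    (volume.restrict (unitSlab i)).map (obliqueProj l (EuclideanSpace.single i 1)) ≤
      Measure.hausdorffMeasure ((n : ℝ) - 1) := by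
  refine Measure.le_iff.2 fun A hA => ?_
  have hmeas : Measurable (obliqueProj l (EuclideanSpace.single i 1)) :=
    (AffineMap.continuous_of_finiteDimensional _).measurable
  rw [Measure.map_apply hmeas hA, Measure.restrict_apply (hmeas hA)]
  calc volume (obliqueProj l (EuclideanSpace.single i 1) ⁻¹' A ∩ unitSlab i)
      ≤ volume {x : Euc n | x i ∈ Set.Icc 0 1 ∧ ∃ y ∈ A, ∀ j ≠ i, y j = x j} :=
        measure_mono fun x ⟨hxA, hxi⟩ =>
          ⟨hxi, _, hxA, fun j hj => by simp [obliqueProj_apply, hj]⟩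
    _ ≤ Measure.hausdorffMeasure ((n : ℝ) - 1) A := by
        simpa using volume_cylinder_le i (Set.Icc 0 1) A

variable {n : ℕ} {ι : Type*} {L : ι → Euc n →ᵃ[ℝ] ℝ} {v : Euc n} {k : ι}

lemma isFacetOf_wall_of_comap_eq_top (hv : (L k).linear v ≠ 0)
    (hspan : (affineSpan ℝ (wall L k)).comap (obliqueProj (L k) v) = ⊤) :
    IsFacetOf (polyhedron L) (wall L k) := by
  have hlin : (L k).linear ≠ 0 := fun h => hv (by rw [h, LinearMap.zero_apply])
  refine ⟨⟨L k, fun h => hlin (by rw [h, AffineMap.zero_linear]),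
    fun y hy => mem_polyhedron.1 hy k, rfl⟩, ?_⟩
  rw [vectorSpan_eq_ker_of_comap_obliqueProj_eq_top (fun y hy => hy.2) hspan,
    Module.Dual.finrank_ker_add_one_of_ne_zero hlin, finrank_euclideanSpace_fin]

lemma exists_restrict_map_obliqueProj_le {σ : Measure (Euc n)} {i : Fin n}
    (hσ : ∀ F, IsFacetOf (polyhedron L) F → ∃ c : ℝ≥0,
      (Measure.hausdorffMeasure ((n : ℝ) - 1)).restrict F ≤ c • σ)
    (hi : (L k).linear (EuclideanSpace.single i 1) ≠ 0) :
    ∃ c : ℝ≥0, ((volume.restrict (unitSlab i)).map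
      (obliqueProj (L k) (EuclideanSpace.single i 1))).restrict (wall L k) ≤
        c • σ.restrict (frontier (polyhedron L)) := by
  set ρ := (volume.restrict (unitSlab i)).map (obliqueProj (L k) (EuclideanSpace.single i 1))
  have hwall : MeasurableSet (wall L k) := (isClosed_wall L k).measurableSet
  by_cases hspan : (affineSpan ℝ (wall L k)).comap
      (obliqueProj (L k) (EuclideanSpace.single i 1)) = ⊤
  · obtain ⟨c, hc⟩ := hσ _ (isFacetOf_wall_of_comap_eq_top hi hspan)
    refine ⟨c, ?_⟩
    calc ρ.restrict (wall L k)
        = (ρ.restrict (wall L k)).restrict (frontier (polyhedron L)) := by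
          rw [Measure.restrict_restrict isClosed_frontier.measurableSet,
            Set.inter_eq_self_of_subset_right (wall_subset_frontier_polyhedron hi)]
      _ ≤ (c • σ).restrict (frontier (polyhedron L)) :=
          Measure.restrict_mono le_rfl ((Measure.restrict_mono le_rfl
            (map_obliqueProj_single_le_hausdorffMeasure (L k) i)).trans hc)
      _ = c • σ.restrict (frontier (polyhedron L)) := Measure.restrict_smul ..
  · refine ⟨0, ?_⟩
    have hnull : ρ (wall L k) = 0 := by
      rw [Measure.map_apply (AffineMap.continuous_of_finiteDimensional _).measurable hwall]
      exact Measure.restrict_le_self.absolutelyContinuous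
        (addHaar_preimage_obliqueProj_eq_zero_of_comap_ne_top volume hspan)
    rw [Measure.restrict_eq_zero.2 hnull, zero_smul]

lemma exists_lintegral_unitSlab_transversalSum_le [Fintype ι] {σ : Measure (Euc n)} (i : Fin n)
    (hσ : ∀ F, IsFacetOf (polyhedron L) F → ∃ c : ℝ≥0,
      (Measure.hausdorffMeasure ((n : ℝ) - 1)).restrict F ≤ c • σ) :
    ∃ C : ℝ≥0, ∀ h : Euc n → ℝ≥0∞, Measurable h →
      ∫⁻ x in unitSlab i, transversalSum L (EuclideanSpace.single i 1) h x ≤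
        C * ∫⁻ x in frontier (polyhedron L), h x ∂σ := by
  choose! c hc using fun k => exists_restrict_map_obliqueProj_le (k := k) (i := i) hσ
  let T : Finset ι := {k | (L k).linear (EuclideanSpace.single i 1) ≠ 0}
  refine ⟨∑ k ∈ T, c k, fun h hh => ?_⟩
  have hwall (k : ι) (hk : k ∈ T) :
      ∫⁻ x in unitSlab i,
          (wall L k).indicator h (obliqueProj (L k) (EuclideanSpace.single i 1) x) ≤
        c k * ∫⁻ x in frontier (polyhedron L), h x ∂σ := by
    have hwm : MeasurableSet (wall L k) := (isClosed_wall L k).measurableSet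
    rw [← lintegral_map (hh.indicator hwm)
      (AffineMap.continuous_of_finiteDimensional _).measurable, lintegral_indicator hwm]
    calc _ ≤ ∫⁻ x, h x ∂(c k • σ.restrict (frontier (polyhedron L))) :=
          lintegral_mono' (hc k (Finset.mem_filter.1 hk).2) le_rfl
      _ = _ := lintegral_smul_measure _ _
  unfold transversalSum
  rw [lintegral_finsetSum _ fun k _ => measurable_indicator_wall_obliqueProj L _ hh k,
    ENNReal.ofNNReal_finsetSum, Finset.sum_mul]
  exact Finset.sum_le_sum hwall

end ShadowMeasure

section LoomisWhitney

lemma lintegral_rpow_le_of_le_update_invariant {ι : Type*} [Fintype ι] [DecidableEq ι]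
    {A : ι → Type*} [∀ i, MeasurableSpace (A i)] (μ : ∀ i, Measure (A i)) [∀ i, SigmaFinite (μ i)]
    {p : ℝ} (hp : Real.HolderConjugate (Fintype.card ι) p) {s : ∀ i, Set (A i)}
    (hs : ∀ i, MeasurableSet (s i)) (hμs : ∀ i, 1 ≤ μ i (s i)) {f : ι → (∀ i, A i) → ℝ≥0∞}
    (hf : ∀ i, Measurable (f i)) (hinv : ∀ i x t, f i (Function.update x i t) = f i x)
    {g : (∀ i, A i) → ℝ≥0∞} (hg : ∀ i x, g x ≤ f i x) :
    ∫⁻ x, g x ^ p ∂Measure.pi μ ≤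
      (∑ i, ∫⁻ x in {x | x i ∈ s i}, f i x ∂Measure.pi μ) ^ p := by
  have hslab (i : ι) : MeasurableSet {x : ∀ i, A i | x i ∈ s i} := measurable_pi_apply i (hs i)
  have hmeas (i : ι) : Measurable ({x | x i ∈ s i}.indicator (f i)) := (hf i).indicator (hslab i)
  let F : (∀ i, A i) → ℝ≥0∞ := fun x => ∑ i, {x | x i ∈ s i}.indicator (f i) x
  have hgF (x : ∀ i, A i) (i : ι) : g x ≤ ∫⁻ t, F (Function.update x i t) ∂μ i :=
    calc g x ≤ f i x * μ i (s i) := (hg i x).trans (le_mul_of_one_le_right' (hμs i))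
      _ = ∫⁻ t, (s i).indicator (fun _ => f i x) t ∂μ i := by
        rw [lintegral_indicator_const (hs i)]
      _ = ∫⁻ t, {x | x i ∈ s i}.indicator (f i) (Function.update x i t) ∂μ i := by
        refine lintegral_congr fun t => ?_
        by_cases ht : t ∈ s i <;> simp [ht, hinv]
      _ ≤ ∫⁻ t, F (Function.update x i t) ∂μ i :=
        lintegral_mono fun t => Finset.single_le_sum
          (f := fun j => {x | x j ∈ s j}.indicator (f j) (Function.update x i t))
          (fun _ _ => zero_le) (Finset.mem_univ i)
  have hgp (x : ∀ i, A i) : g x ^ p = ∏ _i : ι, g x ^ (1 / ((Fintype.card ι : ℝ) - 1)) := by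
    rw [Finset.prod_const, ← ENNReal.rpow_mul_natCast, Finset.card_univ, one_div_mul_eq_div,
      hp.conjugate_eq]
  calc ∫⁻ x, g x ^ p ∂Measure.pi μ
      ≤ ∫⁻ x, ∏ i, (∫⁻ t, F (Function.update x i t) ∂μ i) ^ (1 / ((Fintype.card ι : ℝ) - 1))
          ∂Measure.pi μ := by
        refine lintegral_mono fun x => (hgp x).trans_le (Finset.prod_le_prod' fun i _ => ?_)
        exact ENNReal.rpow_le_rpow (hgF x i) (one_div_nonneg.2 hp.sub_one_pos.le)
    _ ≤ (∫⁻ x, F x ∂Measure.pi μ) ^ p :=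
        lintegral_prod_lintegral_pow_le μ hp (Finset.measurable_fun_sum _ fun i _ => hmeas i)
    _ = _ := by
        simp only [F, lintegral_finsetSum _ fun i _ => hmeas i, lintegral_indicator (hslab _)]

lemma lintegral_rpow_le_of_le_add_smul_single_invariant {n : ℕ} {p : ℝ}
    (hp : Real.HolderConjugate n p) {f : Fin n → Euc n → ℝ≥0∞} (hf : ∀ i, Measurable (f i))
    (hinv : ∀ i x (t : ℝ), f i (x + t • EuclideanSpace.single i 1) = f i x)
    {g : Euc n → ℝ≥0∞} (hg : ∀ i x, g x ≤ f i x) :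
    ∫⁻ x, g x ^ p ≤ (∑ i, ∫⁻ x in unitSlab i, f i x) ^ p := by
  have hupdate (i : Fin n) (y : Fin n → ℝ) (t : ℝ) : WithLp.toLp 2 (Function.update y i t) =
      (WithLp.toLp 2 y : Euc n) + (t - y i) • EuclideanSpace.single i 1 := by
    ext j
    obtain rfl | hj := eq_or_ne j i <;> simp [*]
  have mp := PiLp.volume_preserving_toLp (Fin n)
  have hemb : MeasurableEmbedding (WithLp.toLp 2 : (Fin n → ℝ) → Euc n) :=
    (MeasurableEquiv.toLp 2 (Fin n → ℝ)).measurableEmbedding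
  have hslab (i : Fin n) : ∫⁻ x in unitSlab i, f i x =
      ∫⁻ y in {y : Fin n → ℝ | y i ∈ Set.Icc 0 1}, f i (WithLp.toLp 2 y) :=
    (mp.setLIntegral_comp_preimage_emb hemb _ _).symm
  rw [← mp.lintegral_comp_emb hemb]
  simp_rw [hslab, volume_pi]
  refine lintegral_rpow_le_of_le_update_invariant (fun _ => volume) (by simpa using hp)
    (fun _ => measurableSet_Icc) (by simp) (fun i => (hf i).comp mp.measurable) (fun i y t => ?_)
    (fun i y => hg i _)
  rw [Function.comp_apply, hupdate, hinv, Function.comp_apply]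

end LoomisWhitney

section Estimate

lemma one_lt_of_one_le_of_le_div {n : ℕ} {q : ℝ} (hq1 : 1 ≤ q) (hq2 : q ≤ n / (n - 1)) :
    1 < n := by
  by_contra! hn
  interval_cases n <;> norm_num at hq2 <;> linarith

variable {n : ℕ} {ι : Type*} [Finite ι] {L : ι → Euc n →ᵃ[ℝ] ℝ} {σ : Measure (Euc n)}

lemma exists_eLpNorm'_le_lintegral_frontier_of_holderConjugate
    (hb : Bornology.IsBounded (polyhedron L))
    (hσ : ∀ F, IsFacetOf (polyhedron L) F → ∃ c : ℝ≥0,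
      (Measure.hausdorffMeasure ((n : ℝ) - 1)).restrict F ≤ c • σ)
    {p : ℝ} (hp : Real.HolderConjugate n p) :
    ∃ C : ℝ≥0, ∀ h : Euc n → ℝ≥0∞, Measurable h → QuasiconvexOn ℝ (polyhedron L) h →
      eLpNorm' h p (volume.restrict (polyhedron L)) ≤
        C * ∫⁻ x in frontier (polyhedron L), h x ∂σ := by
  cases nonempty_fintype ι
  choose C hC using fun i : Fin n => exists_lintegral_unitSlab_transversalSum_le (L := L) i hσ
  refine ⟨∑ i, C i, fun h hh hqc => ?_⟩
  have hle (i : Fin n) (x : Euc n) : (polyhedron L).indicator h x ≤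
      transversalSum L (EuclideanSpace.single i 1) h x :=
    Set.indicator_apply_le' (fun hx => le_transversalSum hb (by simp) hqc hx) fun _ => zero_le
  calc eLpNorm' h p (volume.restrict (polyhedron L))
      = (∫⁻ x, (polyhedron L).indicator h x ^ p) ^ (1 / p) := by
        rw [eLpNorm', ← lintegral_indicator (isClosed_polyhedron L).measurableSet]
        refine congrArg (· ^ (1 / p)) (lintegral_congr fun x => ?_)
        by_cases hx : x ∈ polyhedron L <;> simp [hx, hp.symm.pos]
    _ ≤ ((∑ i, ∫⁻ x in unitSlab i, transversalSum L (EuclideanSpace.single i 1) h x) ^ p) ^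
          (1 / p) := by
        gcongr
        · exact one_div_nonneg.2 hp.symm.nonneg
        · exact lintegral_rpow_le_of_le_add_smul_single_invariant hp
            (fun i => measurable_transversalSum L _ hh)
            (fun i => transversalSum_add_smul L _ h) hle
    _ = ∑ i, ∫⁻ x in unitSlab i, transversalSum L (EuclideanSpace.single i 1) h x := by
        rw [one_div, ENNReal.rpow_rpow_inv hp.symm.ne_zero]
    _ ≤ ∑ i, C i * ∫⁻ x in frontier (polyhedron L), h x ∂σ :=
        Finset.sum_le_sum fun i _ => hC i h hh
    _ = _ := by rw [ENNReal.ofNNReal_finsetSum, Finset.sum_mul]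

lemma exists_eLpNorm'_le_lintegral_frontier (hb : Bornology.IsBounded (polyhedron L))
    (hσ : ∀ F, IsFacetOf (polyhedron L) F → ∃ c : ℝ≥0,
      (Measure.hausdorffMeasure ((n : ℝ) - 1)).restrict F ≤ c • σ)
    {q : ℝ} (hq1 : 1 ≤ q) (hq2 : q ≤ n / (n - 1)) :
    ∃ C : ℝ≥0, ∀ u : Euc n → ℝ≥0∞, QuasiconvexOn ℝ (polyhedron L) u →
      eLpNorm' u q (volume.restrict (polyhedron L)) ≤
        C * ∫⁻ x in frontier (polyhedron L), u x ∂σ := by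
  set p : ℝ := n / (n - 1)
  have hp : Real.HolderConjugate n p :=
    .conjExponent (by exact_mod_cast one_lt_of_one_le_of_le_div hq1 hq2)
  obtain ⟨C, hC⟩ := exists_eLpNorm'_le_lintegral_frontier_of_holderConjugate hb hσ hp
  have hq0 : 0 < q := one_pos.trans_le hq1
  have hexp : 0 ≤ 1 / q - 1 / p := sub_nonneg.2 (one_div_le_one_div_of_le hq0 hq2)
  let V : ℝ≥0 := (volume (polyhedron L)).toNNReal
  have hV : volume (polyhedron L) = V := (ENNReal.coe_toNNReal hb.measure_lt_top.ne).symm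
  refine ⟨C * V ^ (1 / q - 1 / p), fun u hu => ?_⟩
  let h := lscHull (polyhedron L) u
  have hclosed := isClosed_polyhedron L
  have hmeas : Measurable h := (lowerSemicontinuous_lscHull _ u).measurable
  have hae : u =ᵐ[volume.restrict (polyhedron L)] h :=
    (ae_restrict_iff' hclosed.measurableSet).2 (ae_eq_lscHull volume hu)
  calc eLpNorm' u q (volume.restrict (polyhedron L))
      = eLpNorm' h q (volume.restrict (polyhedron L)) := eLpNorm'_congr_ae hae
    _ ≤ eLpNorm' h p (volume.restrict (polyhedron L)) * V ^ (1 / q - 1 / p) := by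
        simpa [hV] using eLpNorm'_le_eLpNorm'_mul_rpow_measure_univ hq0 hq2
          hmeas.aestronglyMeasurable (μ := volume.restrict (polyhedron L))
    _ ≤ C * (∫⁻ x in frontier (polyhedron L), h x ∂σ) * V ^ (1 / q - 1 / p) := by
        gcongr
        exact hC h hmeas (quasiconvexOn_lscHull hu)
    _ ≤ C * (∫⁻ x in frontier (polyhedron L), u x ∂σ) * V ^ (1 / q - 1 / p) := by
        gcongr _ * ?_ * _
        exact setLIntegral_mono' isClosed_frontier.measurableSet fun x hx =>
          lscHull_le u (hclosed.frontier_subset hx)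
    _ = _ := by
        rw [ENNReal.coe_mul, ENNReal.coe_rpow_of_nonneg _ hexp, mul_right_comm]

end Estimate

lemma IsPolytope.exists_eq_polyhedron {n : ℕ} {P : Set (Euc n)} (hP : IsPolytope P) :
    ∃ (m : ℕ) (L : Fin m → Euc n →ᵃ[ℝ] ℝ), P = polyhedron L := by
  obtain ⟨-, -, m, L, -, hPL⟩ := hP
  exact ⟨m, L, hPL⟩

lemma IsPolytope.convex {n : ℕ} {P : Set (Euc n)} (hP : IsPolytope P) : Convex ℝ P := by
  obtain ⟨m, L, rfl⟩ := hP.exists_eq_polyhedron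
  exact convex_polyhedron L

theorem poincare_type_estimate_general {n : ℕ} {P : Set (Euc n)} (hP : IsPolytope P)
    {μ σ : Measure (Euc n)} (hμ : ∃ c : ℝ≥0, μ ≤ c • volume)
    (hσ : ∀ F, IsFacetOf P F → ∃ c : ℝ≥0,
      (Measure.hausdorffMeasure ((n : ℝ) - 1)).restrict F ≤ c • σ)
    {q : ℝ} (hq1 : 1 ≤ q) (hq2 : q ≤ n / (n - 1)) :
    ∃ C : ℝ, 0 < C ∧ ∀ u : Euc n → ℝ≥0∞, QuasiconvexOn ℝ P u →
      (∫⁻ x in P, u x ^ q ∂μ) ^ (1 / q) ≤ ENNReal.ofReal C * ∫⁻ x in frontier P, u x ∂σ := by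
  obtain ⟨m, L, rfl⟩ := hP.exists_eq_polyhedron
  obtain ⟨c, hc⟩ := hμ
  obtain ⟨C, hC⟩ := exists_eLpNorm'_le_lintegral_frontier hP.1.isBounded hσ hq1 hq2
  have hq0 : 0 ≤ 1 / q := by positivity
  refine ⟨c ^ (1 / q) * C + 1, by positivity, fun u hu => ?_⟩
  calc eLpNorm' u q (μ.restrict (polyhedron L))
      ≤ eLpNorm' u q ((c • volume).restrict (polyhedron L)) :=
        eLpNorm'_mono_measure u (Measure.restrict_mono le_rfl hc) (by positivity)
    _ = c ^ (1 / q) * eLpNorm' u q (volume.restrict (polyhedron L)) := by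
        rw [Measure.restrict_smul]
        exact eLpNorm'_smul_measure (by positivity) (c : ℝ≥0∞)
    _ ≤ c ^ (1 / q) * (C * ∫⁻ x in frontier (polyhedron L), u x ∂σ) := by gcongr; exact hC u hu
    _ = (c ^ (1 / q) * C : ℝ≥0) * ∫⁻ x in frontier (polyhedron L), u x ∂σ := by
        rw [ENNReal.coe_mul, ENNReal.coe_rpow_of_nonneg _ hq0, mul_assoc]
    _ ≤ _ := by
        gcongr
        rw [← ENNReal.ofReal_coe_nnreal]
        exact ENNReal.ofReal_le_ofReal (by push_cast; linarith)

lemma NSystem.exists_measure_le {n : ℕ} (S : NSystem n) : ∃ c : ℝ≥0, S.μ ≤ c • volume := by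
  obtain ⟨c, -, hμ⟩ := S.flat
  refine ⟨c.toNNReal, hμ.trans_le ?_⟩
  exact smul_mono_right (ENNReal.ofReal c) Measure.restrict_le_self

lemma NSystem.exists_hausdorffMeasure_restrict_le {n : ℕ} (S : NSystem n) (F : Set (Euc n))
    (hF : IsFacetOf S.P F) :
    ∃ c : ℝ≥0, (Measure.hausdorffMeasure ((n : ℝ) - 1)).restrict F ≤ c • S.σ := by
  obtain ⟨c, hc, hσ⟩ := S.flat_bdry F hF
  have hc0 : c.toNNReal ≠ 0 := (Real.toNNReal_pos.2 hc).ne'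
  refine ⟨c.toNNReal⁻¹, ?_⟩
  calc (Measure.hausdorffMeasure ((n : ℝ) - 1)).restrict F
      = c.toNNReal⁻¹ • S.σ.restrict F := by rw [hσ]; exact (inv_smul_smul₀ hc0 _).symm
    _ ≤ c.toNNReal⁻¹ • S.σ := smul_mono_right _ Measure.restrict_le_self

/-- Poincaré type estimate: for an `n`-dimensional system `𝒫 = (P, μ, σ)` and
every `q ∈ [1, n/(n−1)]` there is a constant `C_{P,q} > 0` with
`(∫_P u^q dμ)^{1/q} ≤ C_{P,q} ∫_{∂P} u dσ` for every non-negative convex `u`. -/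
theorem poincare_type_estimate (n : ℕ) (S : NSystem n) :
    ∀ q : ℝ, 1 ≤ q → q ≤ (n : ℝ) / ((n : ℝ) - 1) →
      ∃ C : ℝ, 0 < C ∧
        ∀ u : Euc n → ℝ≥0∞, ConvexFnOn S.P u →
          (∫⁻ x in S.P, u x ^ q ∂S.μ) ^ (1 / q)
            ≤ ENNReal.ofReal C * ∫⁻ x in frontier S.P, u x ∂S.σ := by
  intro q hq1 hq2
  obtain ⟨C, hC, hle⟩ := poincare_type_estimate_general S.simple.1 S.exists_measure_le
    S.exists_hausdorffMeasure_restrict_le hq1 hq2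
  exact ⟨C, hC, fun u hu => hle u (hu.quasiconvexOn S.simple.1.convex)⟩

end
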